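/- arXiv:1402.3056 — 2 statements merged into one kernel-verified Lean document; each statement's English description precedes it below -/
import Mathlib

section
/- Let f be an n-measurable gamble on Ω (for some n ≥ 0), let S be an almost-desirable selection, and let α ∈ ℝ be such that f(ω) − α ≥ limsup F^S(ω) for every path ω. Then f(ω) − α ≥ F^S_n(ω) for every path ω. -/
/-!
An almost-desirable selection can never lose for sure: if `S s x < 0` for every state `x`, then
superadditivity gives `E(S s|s) + E(-S s|s) ≤ E(0|s) = 0`, while `E(-S s|s) ≥ min (-S s) > 0`,
contradicting `E(S s|s) ≥ 0` (`exists_nonneg_of_almostDesirable`). Hence any initial segment `ω_n`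
extends to a path along which `F^S` is non-decreasing from time `n` on. On that path the limsup is
at least `F^S(ω_n)`, and `f` takes the same value as at `ω` by `n`-measurability.
-/

open Filter

/-- The length-`n` initial segment `ω_n` of a path `ω`. -/
def seg {X : Type} (ω : ℕ → X) (n : ℕ) : List X :=
  List.ofFn (fun i : Fin n => ω i)

/-- The cylinder set of a situation `s`: all paths having `s` as initial segment. -/
def cyl {X : Type} (s : List X) : Set (ℕ → X) :=
  {ω | seg ω s.length = s}

/-- A gamble `f` on paths is `n`-measurable if it only depends on the first `n` states. -/
def Meas {X : Type} (n : ℕ) (f : (ℕ → X) → ℝ) : Prop :=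
  ∀ ω ω' : ℕ → X, seg ω n = seg ω' n → f ω = f ω'

/-- A local model assigns to every situation a superadditive, positively homogeneous
functional on gambles on `X` that dominates the minimum. -/
def IsLocalModel {X : Type} [Fintype X] [Nonempty X]
    (E : List X → (X → ℝ) → ℝ) : Prop :=
  (∀ (s : List X) (f g : X → ℝ), E s f + E s g ≤ E s (f + g)) ∧
  (∀ (s : List X) (c : ℝ) (f : X → ℝ), 0 ≤ c → E s (c • f) = c * E s f) ∧
  (∀ (s : List X) (f : X → ℝ), (⨅ x, f x) ≤ E s f)

/-- The real process `F^S` associated with a selection `S`: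
`F^S(x₁…xₙ) = ∑_{i=1}^n S(x₁…x_{i-1})(x_i)`. -/
noncomputable def procF {X : Type} (S : List X → X → ℝ) (s : List X) : ℝ :=
  ∑ i : Fin s.length, S (s.take i.1) (s.get i)

/-- `limsup F^S`, as a gamble on paths (valued in the extended reals). -/
noncomputable def limsupF {X : Type} (S : List X → X → ℝ) (ω : ℕ → X) : EReal :=
  Filter.limsup (fun n => ((procF S (seg ω n) : ℝ) : EReal)) Filter.atTop

/-- A selection is almost-desirable (w.r.t. the local model `E`) if `E(S(s)|s) ≥ 0`
for every situation `s`. -/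
def AlmostDesirable {X : Type} (E : List X → (X → ℝ) → ℝ)
    (S : List X → X → ℝ) : Prop :=
  ∀ s : List X, 0 ≤ E s (S s)

/-- The Williams natural extension `E_W(f)`. -/
noncomputable def EW {X : Type} (E : List X → (X → ℝ) → ℝ)
    (f : (ℕ → X) → ℝ) : EReal :=
  sSup {a : EReal | ∃ α : ℝ, a = (α : EReal) ∧
    ∃ (n : ℕ) (S : List X → X → ℝ), AlmostDesirable E S ∧
      ∀ ω : ℕ → X, procF S (seg ω n) ≤ f ω - α}

/-- The Ville–Vovk–Shafer natural extension `E_V(f)`. -/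
noncomputable def EV {X : Type} (E : List X → (X → ℝ) → ℝ)
    (f : (ℕ → X) → ℝ) : EReal :=
  sSup {a : EReal | ∃ α : ℝ, a = (α : EReal) ∧
    ∃ S : List X → X → ℝ, AlmostDesirable E S ∧
      ∀ ω : ℕ → X, limsupF S ω ≤ ((f ω - α : ℝ) : EReal)}

lemma seg_succ {X : Type} (ω : ℕ → X) (k : ℕ) : seg ω (k + 1) = seg ω k ++ [ω k] := by
  rw [seg, List.ofFn_succ_last]
  rfl

lemma procF_concat {X : Type} (S : List X → X → ℝ) (s : List X) (x : X) :
    procF S (s ++ [x]) = procF S s + S s x := by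
  have hlen : (s ++ [x]).length = s.length + 1 := by simp
  unfold procF
  rw [← Equiv.sum_comp (finCongr hlen.symm), Fin.sum_univ_castSucc]
  congr 1
  · refine Finset.sum_congr rfl fun i _ => ?_
    simp [List.take_append_of_le_length i.2.le]
  · simp

lemma exists_nonneg_of_almostDesirable {X : Type} [Fintype X] [Nonempty X]
    {E : List X → (X → ℝ) → ℝ} (hE : IsLocalModel E) {S : List X → X → ℝ}
    (hS : AlmostDesirable E S) (s : List X) : ∃ x, 0 ≤ S s x := by
  obtain ⟨hadd, hhom, hmin⟩ := hE
  by_contra! hneg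
  have h0 : E s 0 = 0 := by simpa using hhom s 0 0 le_rfl
  have hle : E s (S s) + E s (-S s) ≤ 0 := by simpa [h0] using hadd s (S s) (-S s)
  obtain ⟨x, hx⟩ := exists_eq_ciInf_of_finite (f := (-S s))
  have hge := hmin s (-S s)
  rw [← hx, Pi.neg_apply] at hge
  linarith [hS s, hneg x]

/-- Some path follows `ω` up to time `n` and is steered from then on by the strategy `c`, which
prescribes the next state from the current situation. -/
lemma exists_path_extending {X : Type} (c : List X → X) (ω : ℕ → X) (n : ℕ) :
    ∃ ω' : ℕ → X, seg ω' n = seg ω n ∧ ∀ k, n ≤ k → ω' k = c (seg ω' k) := by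
  let L : ℕ → List X := fun k => Nat.rec (seg ω n) (fun _ l => l ++ [c l]) k
  let ω' : ℕ → X := fun i => if i < n then ω i else c (L (i - n))
  have h0 : seg ω' n = seg ω n := by
    unfold seg
    congr 1
    funext i
    simp [ω', i.2]
  have hω' : ∀ k, ω' (n + k) = c (L k) := fun k => by simp [ω']
  have hL : ∀ k, seg ω' (n + k) = L k := by
    intro k
    induction k with
    | zero => exact h0
    | succ k ih => rw [← add_assoc, seg_succ, ih, hω']
  refine ⟨ω', h0, fun k hk => ?_⟩
  obtain ⟨j, rfl⟩ := Nat.exists_eq_add_of_le hk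
  rw [hL, hω']

/-- if an `n`-measurable gamble satisfies `f − α ≥ limsup F^S` pointwise
for an almost-desirable selection `S`, then also `f − α ≥ F^S_n` pointwise. -/
theorem meas_ge_limsup_implies_ge_procF {X : Type} [Fintype X] [Nonempty X]
    (E : List X → (X → ℝ) → ℝ) (hE : IsLocalModel E)
    (n : ℕ) (f : (ℕ → X) → ℝ) (hf : Meas n f)
    (S : List X → X → ℝ) (hS : AlmostDesirable E S)
    (α : ℝ) (h : ∀ ω : ℕ → X, limsupF S ω ≤ ((f ω - α : ℝ) : EReal)) :
    ∀ ω : ℕ → X, procF S (seg ω n) ≤ f ω - α := by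
  intro ω
  choose c hc using exists_nonneg_of_almostDesirable hE hS
  obtain ⟨ω', hseg, hstep⟩ := exists_path_extending c ω n
  have hmono : ∀ k, n ≤ k → procF S (seg ω n) ≤ procF S (seg ω' k) := by
    intro k hk
    induction k, hk using Nat.le_induction with
    | base => rw [hseg]
    | succ k hk ih =>
      rw [seg_succ, procF_concat, hstep k hk]
      linarith [hc (seg ω' k)]
  have hlim : ((procF S (seg ω n) : ℝ) : EReal) ≤ limsupF S ω' := by
    refine le_limsup_of_frequently_le (Eventually.frequently ?_)
    filter_upwards [eventually_ge_atTop n] with k hk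
    exact EReal.coe_le_coe_iff.mpr (hmono k hk)
  rw [← hf ω' ω hseg]
  exact EReal.coe_le_coe_iff.mp (hlim.trans (h ω'))
end

section
/- Let τ : Ω → ℕ be bounded and satisfy: for all ω, ω' ∈ Ω, if ω'_{τ(ω)} = ω_{τ(ω)} then τ(ω') = τ(ω). Let S be an almost-desirable selection and define the selection S* by S*(s) = S(s) if τ(ω) > ℓ(s) for all ω ∈ cyl(s), and S*(s) = 0 otherwise. Then S* is almost-desirable and limsup F^{S*}(ω) = F^S(ω_{τ(ω)}) for every path ω. -/
/-!
Along a path `ω`, the process `F^S` after `n` steps is `∑ i < n, S (ω_i) (x_{i+1})`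
(`procF_seg`). The stopping-time property makes "`τ > i` on the whole cylinder of `ω_i`"
equivalent to `i < τ ω` (`forall_cyl_iff`): a path through `ω_i` that stops by time `i`
forces `ω` to stop at that same time. So the stopped selection contributes the
increments of `S` at the times `i < τ ω` and zero afterwards, and `n ↦ F^{S*}(ω_n)` is
constant, equal to `F^S(ω_{τ ω})`, from `n = τ ω` on; its limsup is this constant.
Almost-desirability is inherited pointwise, since `E(0|s) = 0` by homogeneity.
-/

open Filter

theorem seg_length {X : Type} (ω : ℕ → X) (n : ℕ) : (seg ω n).length = n := by
  simp [seg]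

theorem seg_eq_iff {X : Type} (ω ω' : ℕ → X) (n : ℕ) :
    seg ω n = seg ω' n ↔ ∀ i < n, ω i = ω' i := by
  unfold seg
  rw [List.ofFn_inj, funext_iff]
  exact ⟨fun h i hi => h ⟨i, hi⟩, fun h i => h i i.2⟩

theorem take_seg {X : Type} (ω : ℕ → X) {i n : ℕ} (h : i ≤ n) :
    (seg ω n).take i = seg ω i := by
  apply List.ext_getElem
  · simp [seg, h]
  · intro j h₁ h₂
    simp [seg]

theorem procF_seg {X : Type} (S : List X → X → ℝ) (ω : ℕ → X) (n : ℕ) :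
    procF S (seg ω n) = ∑ i ∈ Finset.range n, S (seg ω i) (ω i) := by
  have h : procF S (seg ω n) = ∑ i : Fin (seg ω n).length, S (seg ω i) (ω i) := by
    unfold procF
    refine Finset.sum_congr rfl fun i _ => ?_
    have hi : (i : ℕ) ≤ n := (i.2.trans_eq (seg_length ω n)).le
    have hget : (seg ω n).get i = ω i := by
      rw [List.get_eq_getElem]
      simp only [seg, List.getElem_ofFn]
    rw [take_seg ω hi, hget]
  rw [h, Fin.sum_univ_eq_sum_range (fun i => S (seg ω i) (ω i)), seg_length]

/-- The condition defining the stopped selection at `ω_i` can be tested on `ω` alone. -/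
theorem forall_cyl_iff {X : Type} {τ : (ℕ → X) → ℕ}
    (hτ : ∀ ω ω' : ℕ → X, seg ω' (τ ω) = seg ω (τ ω) → τ ω' = τ ω)
    (ω : ℕ → X) (i : ℕ) :
    (∀ ω' ∈ cyl (seg ω i), (seg ω i).length < τ ω') ↔ i < τ ω := by
  simp only [cyl, Set.mem_ofPred_eq, seg_length]
  refine ⟨fun h => h ω rfl, fun h ω' hω' => ?_⟩
  by_contra! hle
  -- `ω` and `ω'` agree up to time `i`, hence up to the stopping time of `ω'`.
  have heq : τ ω = τ ω' := hτ ω' ω <| (seg_eq_iff _ _ _).2 fun j hj =>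
    ((seg_eq_iff _ _ _).1 hω' j (hj.trans_le hle)).symm
  omega

/-- stopping an almost-desirable selection at a bounded stopping time `τ`
yields an almost-desirable selection `S*` with `limsup F^{S*}(ω) = F^S(ω_{τ(ω)})`. -/
theorem stopped_selection {X : Type} [Fintype X] [Nonempty X]
    (E : List X → (X → ℝ) → ℝ) (hE : IsLocalModel E)
    (τ : (ℕ → X) → ℕ) (hbd : ∃ N : ℕ, ∀ ω : ℕ → X, τ ω ≤ N)
    (hτ : ∀ ω ω' : ℕ → X, seg ω' (τ ω) = seg ω (τ ω) → τ ω' = τ ω)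
    (S : List X → X → ℝ) (hS : AlmostDesirable E S)
    (S' : List X → X → ℝ)
    (hS'₁ : ∀ s : List X, (∀ ω ∈ cyl s, s.length < τ ω) → S' s = S s)
    (hS'₂ : ∀ s : List X, ¬ (∀ ω ∈ cyl s, s.length < τ ω) → S' s = 0) :
    AlmostDesirable E S' ∧
    ∀ ω : ℕ → X, limsupF S' ω = ((procF S (seg ω (τ ω)) : ℝ) : EReal) := by
  constructor
  · intro s
    by_cases h : ∀ ω ∈ cyl s, s.length < τ ω
    · rw [hS'₁ s h]
      exact hS s
    · rw [hS'₂ s h]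
      have h0 := hE.2.1 s 0 0 le_rfl
      rw [zero_smul, zero_mul] at h0
      exact h0.ge
  · intro ω
    have hconst : ∀ n, τ ω ≤ n → procF S' (seg ω n) = procF S (seg ω (τ ω)) := by
      intro n hn
      rw [procF_seg, procF_seg]
      symm
      apply Finset.sum_subset_zero_on_sdiff (Finset.range_mono hn)
      · intro i hi
        have hi' : ¬ i < τ ω := by simpa using (Finset.mem_sdiff.1 hi).2
        rw [hS'₂ _ (mt (forall_cyl_iff hτ ω i).1 hi'), Pi.zero_apply]
      · intro i hi
        rw [hS'₁ _ ((forall_cyl_iff hτ ω i).2 (Finset.mem_range.1 hi))]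
    unfold limsupF
    apply Tendsto.limsup_eq
    apply tendsto_const_nhds.congr'
    filter_upwards [eventually_ge_atTop (τ ω)] with n hn
    rw [hconst n hn]
end
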